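/- Let k ∈ [0,1) and let x_l ≤ x_r < o < y_l ≤ y_r in [0,1] with 1 − y_r ≥ x_l. Let (a*, b*) = ((x_l+x_r)/2, (y_l−x_l)/2 + 1/2) be the optimal edge for maximum cost. Then the maximum cost of the edge (x_l, y_r) is at most 2·cost(a*,b*,x_r); that is, max over the four agents of their cost under (x_l, y_r) is at most twice the optimal maximum cost. -/

import Mathlib

/-- The maximum cost of the edge `(x_l, y_r)` is at most twice the optimal maximum cost
`cost(a*, b*, x_r)` where `(a*,b*) = ((x_l+x_r)/2, (y_l-x_l)/2 + 1/2)`. -/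
theorem stmt_17 (k o xl xr yl yr : ℝ)
    (hk0 : 0 ≤ k) (hk1 : k < 1) (ho0 : 0 < o) (ho1 : o < 1)
    (hxl0 : 0 ≤ xl) (hxlr : xl ≤ xr) (hxro : xr < o)
    (hoyl : o < yl) (hylr : yl ≤ yr) (hyr1 : yr ≤ 1)
    (hyx : 1 - yr ≥ xl) :
    max (max (|xl - xl| + k * (yr - xl) + (1 - yr)) (|xr - xl| + k * (yr - xl) + (1 - yr)))
        (max (|yl - yr| + k * (yr - xl) + xl) (|yr - yr| + k * (yr - xl) + xl))
      ≤ 2 * (|xr - (xl + xr) / 2| + k * (((yl - xl) / 2 + 1 / 2) - (xl + xr) / 2)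
            + (1 - ((yl - xl) / 2 + 1 / 2))) := by
  have hk : 0 ≤ k * ((yl - xr) + (1 - yr - xl)) :=
    mul_nonneg hk0 (by linarith)
  have h1 : |xr - (xl + xr) / 2| = xr - (xl + xr) / 2 := abs_of_nonneg (by linarith)
  have h2 : |xr - xl| = xr - xl := abs_of_nonneg (by linarith)
  have h3 : |yl - yr| = yr - yl := by rw [abs_sub_comm]; exact abs_of_nonneg (by linarith)
  rw [h1, h2, h3, sub_self, sub_self, abs_zero]
  refine max_le (max_le ?_ ?_) (max_le ?_ ?_) <;> nlinarith
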